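/- Let R be a commutative Noetherian ring and let α be a non-decreasing finite list of nonzero elements of R (i.e., Ann(v_i) ⊆ Ann(v_j) implies i ≤ j). Then there exists an independent list β of nonzero elements of R such that α ≺* β, where ≺* is the reflexive-transitive closure of the relation ≺. -/

import Mathlib

/-- The annihilator ideal of an element `v`: `{x | v * x = 0}`. -/
def ann {R : Type*} [CommRing R] (v : R) : Ideal R where
  carrier := {x | v * x = 0}
  add_mem' := by
    intro a b ha hb
    simp only [Set.mem_setOf_eq] at *
    rw [mul_add, ha, hb, add_zero]
  zero_mem' := by simp
  smul_mem' := by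
    intro c x hx
    simp only [Set.mem_setOf_eq, smul_eq_mul] at *
    rw [mul_comm c x, ← mul_assoc, hx, zero_mul]

/-- The relation `α ≺ β` on finite lists: `β = (w_1, ..., w_m)` with `m ≤ length α`,
`w_i = v_i` for `i < m`, and `ann v_m ⊊ ann w_m`, i.e. `α = γ ++ v :: δ`,
`β = γ ++ [w]` with `ann v ⊊ ann w`. -/
def Prec {R : Type*} [CommRing R] (α β : List R) : Prop :=
  ∃ (γ δ : List R) (v w : R), α = γ ++ v :: δ ∧ β = γ ++ [w] ∧ ann v < ann w

/-- A list is independent if for each position `k`, the intersection of the annihilators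
of the other entries is not contained in the annihilator of the `k`-th entry. -/
def IndepList {R : Type*} [CommRing R] (l : List R) : Prop :=
  ∀ k : Fin l.length,
    ¬ (⨅ i : {i : Fin l.length // i ≠ k}, ann (l.get i.1)) ≤ ann (l.get k)

/-!
Replacing an entry of a list by one with a larger annihilator, and discarding everything behind it,
preserves the non-decreasing condition. By the ascending chain condition on annihilators of
elements this can only be repeated finitely often, even though the discarded tail may have been
arbitrarily long. When no entry can be replaced by a nonzero element, every annihilator of an entry
is maximal among annihilators of nonzero elements, hence prime; and since the list is
non-decreasing, no annihilator of an entry contains that of another one. A prime ideal containing a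
finite intersection contains one of its members, so the list is independent.
-/

section

variable {R : Type*} [CommRing R]

theorem mem_ann {v x : R} : x ∈ ann v ↔ v * x = 0 := Iff.rfl

theorem ann_ne_top {v : R} (hv : v ≠ 0) : ann v ≠ ⊤ := by
  rwa [Ideal.ne_top_iff_one, mem_ann, mul_one]

theorem ann_le_ann_mul (v x : R) : ann v ≤ ann (v * x) := fun z hz ↦ by
  rw [mem_ann] at hz ⊢
  rw [mul_right_comm, hz, zero_mul]

theorem isPrime_ann_of_forall_not_lt {v : R} (hv : v ≠ 0)
    (hmax : ∀ w, w ≠ 0 → ¬ ann v < ann w) : (ann v).IsPrime where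
  ne_top' := ann_ne_top hv
  mem_or_mem' {x y} hxy := by
    refine or_iff_not_imp_left.2 fun hx ↦ ?_
    have ann_mul_eq : ann v = ann (v * x) :=
      eq_of_le_of_not_lt (ann_le_ann_mul v x) (hmax (v * x) hx)
    rwa [ann_mul_eq, mem_ann, mul_assoc]

theorem indepList_of_isPrime_ann {l : List R} (hprime : ∀ v ∈ l, (ann v).IsPrime)
    (hanti : ∀ i k : Fin l.length, i ≠ k → ¬ ann (l.get i) ≤ ann (l.get k)) : IndepList l := by
  classical
  intro k hk
  rw [← Finset.inf_univ_eq_iInf, (hprime _ (l.get_mem k)).inf_le'] at hk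
  obtain ⟨⟨i, hik⟩, -, hle⟩ := hk
  exact hanti i k hik hle

/-- A list is non-decreasing if an inclusion of annihilators can only go from an entry to itself or
to a later one; this is the invariant kept while climbing along `≺`. -/
def NondecList (l : List R) : Prop :=
  ∀ i j : Fin l.length, ann (l.get i) ≤ ann (l.get j) → (i : ℕ) ≤ j

theorem nondecList_iff_pairwise {l : List R} :
    NondecList l ↔ l.Pairwise fun v w ↦ ¬ ann w ≤ ann v := by
  rw [List.pairwise_iff_get]
  exact ⟨fun h i j hij hle ↦ (h j i hle).not_gt hij,
    fun h i j hle ↦ not_lt.1 fun hji ↦ h j i hji hle⟩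

theorem NondecList.ann_get_lt {l : List R} (hl : NondecList l) {i j : Fin l.length} (hij : i ≠ j)
    (hle : ann (l.get i) ≤ ann (l.get j)) : ann (l.get i) < ann (l.get j) :=
  lt_of_le_not_ge hle fun hge ↦ hij (Fin.ext ((hl i j hle).antisymm (hl j i hge)))

theorem NondecList.append_singleton {γ δ : List R} {v w : R} (hl : NondecList (γ ++ v :: δ))
    (hvw : ann v ≤ ann w) : NondecList (γ ++ [w]) := by
  rw [nondecList_iff_pairwise, List.pairwise_append] at hl ⊢
  obtain ⟨hγ, -, hγv⟩ := hl
  refine ⟨hγ, List.pairwise_singleton _ w, fun u hu w' hw' hle ↦ ?_⟩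
  rw [List.mem_singleton.1 hw'] at hle
  exact hγv u hu v List.mem_cons_self (hvw.trans hle)

theorem NondecList.indepList_of_forall_not_lt {l : List R} (hl : NondecList l)
    (hl0 : ∀ v ∈ l, v ≠ 0) (hmax : ∀ v ∈ l, ∀ w, w ≠ 0 → ¬ ann v < ann w) : IndepList l :=
  indepList_of_isPrime_ann (fun v hv ↦ isPrime_ann_of_forall_not_lt (hl0 v hv) (hmax v hv))
    fun i k hik hle ↦
      hmax _ (l.get_mem i) _ (hl0 _ (l.get_mem k)) (hl.ann_get_lt hik hle)

theorem NondecList.exists_prec {l : List R} (hl : NondecList l) (hl0 : ∀ x ∈ l, x ≠ 0) {v w : R}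
    (hv : v ∈ l) (hw : w ≠ 0) (hvw : ann v < ann w) :
    ∃ l', Prec l l' ∧ NondecList l' ∧ ∀ x ∈ l', x ≠ 0 := by
  obtain ⟨γ, δ, rfl⟩ := List.append_of_mem hv
  refine ⟨γ ++ [w], ⟨γ, δ, v, w, rfl, rfl, hvw⟩, hl.append_singleton hvw.le, fun x hx ↦ ?_⟩
  rcases List.mem_append.1 hx with hxγ | hxw
  · exact hl0 x (List.mem_append_left _ hxγ)
  · rwa [List.mem_singleton.1 hxw]

theorem not_prec_nil (l : List R) : ¬ Prec [] l := by
  rintro ⟨γ, δ, v, w, hnil, -, -⟩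
  exact List.append_ne_nil_of_right_ne_nil γ (List.cons_ne_nil v δ) hnil.symm

theorem Prec.eq_singleton_or_eq_cons {v : R} {l l' : List R} (h : Prec (v :: l) l') :
    (∃ w, ann v < ann w ∧ l' = [w]) ∨ ∃ m, Prec l m ∧ l' = v :: m := by
  obtain ⟨γ, δ, u, w, hsplit, rfl, huw⟩ := h
  rcases List.cons_eq_append_iff.1 hsplit with ⟨rfl, hcons⟩ | ⟨γ', rfl, rfl⟩
  · obtain ⟨rfl, -⟩ := List.cons_eq_cons.1 hcons
    exact .inl ⟨w, huw, rfl⟩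
  · exact .inr ⟨γ' ++ [w], ⟨γ', δ, u, w, rfl, rfl, huw⟩, rfl⟩

theorem acc_swap_prec_nil : Acc (Function.swap Prec) ([] : List R) :=
  ⟨_, fun l h ↦ (not_prec_nil l h).elim⟩

theorem acc_swap_prec_cons {v : R} {l : List R} (hl : Acc (Function.swap Prec) l)
    (hv : ∀ w, ann v < ann w → Acc (Function.swap Prec) [w]) :
    Acc (Function.swap Prec) (v :: l) := by
  induction hl with
  | intro l _ ih =>
    refine ⟨_, fun l' h ↦ ?_⟩
    rcases Prec.eq_singleton_or_eq_cons h with ⟨w, hvw, rfl⟩ | ⟨m, hm, rfl⟩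
    · exact hv w hvw
    · exact ih m hm

theorem wellFounded_swap_prec (hR : WellFounded fun v w : R ↦ ann w < ann v) :
    WellFounded (Function.swap (Prec (R := R))) := by
  have acc_singleton (v : R) : Acc (Function.swap Prec) [v] := by
    induction v using hR.induction with
    | _ v ih => exact acc_swap_prec_cons acc_swap_prec_nil ih
  refine ⟨fun l ↦ ?_⟩
  induction l with
  | nil => exact acc_swap_prec_nil
  | cons v l ih => exact acc_swap_prec_cons ih fun w _ ↦ acc_singleton w

theorem exists_independent_above_general (hR : WellFounded fun v w : R ↦ ann w < ann v)
    (α : List R) (hα0 : ∀ x ∈ α, x ≠ 0) (hα : NondecList α) :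
    ∃ β : List R, (∀ x ∈ β, x ≠ 0) ∧ IndepList β ∧ Relation.ReflTransGen Prec α β := by
  induction α using (wellFounded_swap_prec hR).induction with
  | _ α ih =>
    by_cases hmax : ∀ v ∈ α, ∀ w, w ≠ 0 → ¬ ann v < ann w
    · exact ⟨α, hα0, hα.indepList_of_forall_not_lt hα0 hmax, .refl⟩
    · push Not at hmax
      obtain ⟨v, hv, w, hw, hvw⟩ := hmax
      obtain ⟨α', hprec, hα', hα'0⟩ := hα.exists_prec hα0 hv hw hvw
      obtain ⟨β, hβ0, hβ, hα'β⟩ := ih α' hprec hα'0 hα'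
      exact ⟨β, hβ0, hβ, .head hprec hα'β⟩

end

/-- In a commutative Noetherian ring, every non-decreasing list of nonzero elements
is related by `≺*` to an independent list of nonzero elements. -/
theorem exists_independent_above {R : Type*} [CommRing R] [IsNoetherianRing R]
    (α : List R) (hα0 : ∀ x ∈ α, x ≠ 0)
    (hnd : ∀ i j : Fin α.length, ann (α.get i) ≤ ann (α.get j) → (i : ℕ) ≤ j) :
    ∃ β : List R, (∀ x ∈ β, x ≠ 0) ∧ IndepList β ∧ Relation.ReflTransGen Prec α β :=
  exists_independent_above_general (InvImage.wf ann wellFounded_gt) α hα0 hnd
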